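/- Let (A, ∘, [·,·]) be an F-algebra over a commutative ring R with identity element e for ∘, and let X ∈ A satisfy identity (19): [X^{∘n}, X] = (1 − (n : ℤ)) • (X^{∘n} ∘ [e, X]) for every natural number n ≥ 1. Then identity (20) holds: for all natural numbers m, n with m + n ≥ 1, [X^{∘n}, X^{∘m}] = ((m : ℤ) − (n : ℤ)) • (X^{∘(m+n−1)} ∘ [e, X]), where X^{∘k} denotes the k-th ∘-power of X and X^{∘0} := e. -/

import Mathlib

/-!
The F-algebra identity says that `Y ↦ P_Y(Z, W)` is a derivation of `∘`, so
`P_{Y^n} = n Y^{n-1} ∘ P_Y`. The defect of the power rule,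
`δ_m(Y, Z) = [Y, Z^m] − m Z^{m-1} ∘ [Y, Z]`, depends on `Y` only through `P_Y`, and linearly so;
hence `δ_m(Y^n, Z) = n Y^{n-1} ∘ δ_m(Y, Z)`. For `Y = Z = X` and an alternating bracket this is
`[X^n, X^m] = n X^{n-1} ∘ [X, X^m] − m X^{m-1} ∘ [X, X^n]`, in any F-algebra.
Inserting (19) gives the coefficient `n (m − 1) − m (n − 1) = m − n`.
-/

/-- The deviation `P_X(Z,W) = [X, Z∘W] − [X,Z]∘W − Z∘[X,W]` of the structure
`(A, ∘, [·,·])` from being a Poisson algebra. -/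
def Pdev {R A : Type*} [CommRing R] [AddCommGroup A] [Module R A]
    (mul brk : A →ₗ[R] A →ₗ[R] A) (X Z W : A) : A :=
  brk X (mul Z W) - mul (brk X Z) W - mul Z (brk X W)

section CommAlgebra

variable {R A : Type*} [CommRing R] [CommRing A] [Algebra R A] {brk : A →ₗ[R] A →ₗ[R] A}

/-- The F-algebra identity for a bracket on a commutative algebra: `P_X` is a derivation in `X`.
The Lie axioms for the bracket are not part of this predicate. -/
def IsFBracket (brk : A →ₗ[R] A →ₗ[R] A) : Prop :=
  ∀ x y z w : A, Pdev (LinearMap.mul R A) brk (x * y) z w =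
    x * Pdev (LinearMap.mul R A) brk y z w + y * Pdev (LinearMap.mul R A) brk x z w

/-- The map `X ↦ P_X(z, w)` of an F-algebra as a derivation, which makes the power rule for
derivations available. -/
def IsFBracket.pdevDerivation (hF : IsFBracket brk) (z w : A) : Derivation R A A :=
  Derivation.mk'
    (brk.flip (z * w) - LinearMap.mulRight R w ∘ₗ brk.flip z - LinearMap.mulLeft R z ∘ₗ brk.flip w)
    fun x y => hF x y z w

theorem IsFBracket.pdevDerivation_apply (hF : IsFBracket brk) (x z w : A) :
    hF.pdevDerivation z w x = Pdev (LinearMap.mul R A) brk x z w :=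
  rfl

theorem IsFBracket.pdev_pow (hF : IsFBracket brk) (x z w : A) (n : ℕ) :
    Pdev (LinearMap.mul R A) brk (x ^ n) z w =
      n * x ^ (n - 1) * Pdev (LinearMap.mul R A) brk x z w := by
  simpa only [pdevDerivation_apply, nsmul_eq_mul, smul_eq_mul, ← mul_assoc] using
    (hF.pdevDerivation z w).leibniz_pow x n

/-- The defect `[y, z^m] − m z^(m-1) [y, z]` of the power rule for the map `[y, ·]` at `z`.
For `m = 0` the truncated exponent is harmless, its coefficient being `0`. -/
def powDefect (brk : A →ₗ[R] A →ₗ[R] A) (y z : A) (m : ℕ) : A :=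
  brk y (z ^ m) - m * z ^ (m - 1) * brk y z

theorem powDefect_zero (y z : A) :
    powDefect brk y z 0 = -Pdev (LinearMap.mul R A) brk y 1 1 := by
  simp [powDefect, Pdev]

theorem powDefect_succ (y z : A) (m : ℕ) :
    powDefect brk y z (m + 1) =
      z * powDefect brk y z m + Pdev (LinearMap.mul R A) brk y z (z ^ m) := by
  have hpred : (m : A) * z ^ m = z * (m * z ^ (m - 1)) := by
    cases m with
    | zero => simp
    | succ m => rw [Nat.add_sub_cancel]; ring
  simp only [powDefect, Pdev, LinearMap.mul_apply', Nat.add_sub_cancel, ← pow_succ']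
  push_cast
  linear_combination (-brk y z) * hpred

theorem powDefect_eq_mul_of_pdev_eq_mul {c x y : A}
    (h : ∀ z w, Pdev (LinearMap.mul R A) brk y z w = c * Pdev (LinearMap.mul R A) brk x z w)
    (z : A) (m : ℕ) : powDefect brk y z m = c * powDefect brk x z m := by
  induction m with
  | zero => rw [powDefect_zero, powDefect_zero, h, mul_neg]
  | succ m ih => rw [powDefect_succ, powDefect_succ, h, ih]; ring

theorem IsFBracket.powDefect_pow (hF : IsFBracket brk) (y z : A) (m n : ℕ) :
    powDefect brk (y ^ n) z m = n * y ^ (n - 1) * powDefect brk y z m :=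
  powDefect_eq_mul_of_pdev_eq_mul (fun u v => hF.pdev_pow y u v n) z m

theorem IsFBracket.bracket_pow_pow (hF : IsFBracket brk) (halt : brk.IsAlt) (x : A) (m n : ℕ) :
    brk (x ^ n) (x ^ m) =
      n * x ^ (n - 1) * brk x (x ^ m) - m * x ^ (m - 1) * brk x (x ^ n) := by
  have hdefect := hF.powDefect_pow x x m n
  simp only [powDefect, halt x, ← halt.neg x (x ^ n)] at hdefect
  linear_combination hdefect

theorem IsFBracket.bracket_pow_pow_of_bracket_pow_self (hF : IsFBracket brk) (halt : brk.IsAlt)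
    {x : A} (hx : ∀ n : ℕ, 1 ≤ n → brk (x ^ n) x = (1 - (n : ℤ)) • (x ^ n * brk 1 x)) (m n : ℕ) :
    brk (x ^ n) (x ^ m) = ((m : ℤ) - n) • (x ^ (m + n - 1) * brk 1 x) := by
  have hself (k : ℕ) : brk x (x ^ k) = (k - 1) * (x ^ k * brk 1 x) := by
    rw [← halt.neg (x ^ k) x]
    rcases k.eq_zero_or_pos with rfl | hk
    · simp
    · rw [hx k hk, zsmul_eq_mul]
      push_cast
      ring
  rw [hF.bracket_pow_pow halt, hself, hself, zsmul_eq_mul]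
  rcases m with _ | m <;> rcases n with _ | n
  all_goals
    simp only [Nat.add_sub_cancel, zero_add, add_zero, ← add_assoc]
    push_cast
    ring

end CommAlgebra

section BilinearMul

variable {R A : Type*} [CommRing R] [AddCommGroup A] [Module R A]

/-- The ring structure on `A` given by a commutative, associative and unital bilinear
multiplication, keeping the addition of `A`. -/
abbrev commRingOfBilinear (mul : A →ₗ[R] A →ₗ[R] A)
    (hcomm : ∀ x y, mul x y = mul y x) (hassoc : ∀ x y z, mul (mul x y) z = mul x (mul y z))
    (e : A) (he : ∀ x, mul e x = x) : CommRing A :=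
  { ‹AddCommGroup A› with
    mul := fun x y => mul x y
    one := e
    left_distrib := fun x y z => map_add (mul x) y z
    right_distrib := fun x y z => LinearMap.map_add₂ mul x y z
    zero_mul := LinearMap.map_zero₂ mul
    mul_zero := fun x => map_zero (mul x)
    mul_assoc := hassoc
    mul_comm := hcomm
    one_mul := he
    mul_one := fun x => (hcomm x e).trans (he x) }

theorem bracket_powers_of_identity19_general
    (mul brk : A →ₗ[R] A →ₗ[R] A)
    (hcomm : ∀ x y : A, mul x y = mul y x)
    (hassoc : ∀ x y z : A, mul (mul x y) z = mul x (mul y z))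
    (halt : ∀ x : A, brk x x = 0)
    (hF : ∀ x y z w : A,
      Pdev mul brk (mul x y) z w = mul x (Pdev mul brk y z w) + mul y (Pdev mul brk x z w))
    (e : A) (he : ∀ x : A, mul e x = x)
    (X : A) (pow : ℕ → A) (hpow0 : pow 0 = e)
    (hpowS : ∀ k : ℕ, pow (k + 1) = mul X (pow k))
    (h19 : ∀ n : ℕ, 1 ≤ n →
      brk (pow n) X = (1 - (n : ℤ)) • mul (pow n) (brk e X)) :
    ∀ m n : ℕ, 1 ≤ m + n →
      brk (pow n) (pow m) = ((m : ℤ) - (n : ℤ)) • mul (pow (m + n - 1)) (brk e X) := by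
  let _ : CommRing A := commRingOfBilinear mul hcomm hassoc e he
  let _ : Algebra R A :=
    Algebra.ofModule (LinearMap.map_smul₂ mul) fun r x => (mul x).map_smul r
  have hFbrk : IsFBracket brk := hF
  have hpow (k : ℕ) : pow k = X ^ k := by
    induction k with
    | zero => rw [hpow0, pow_zero]; rfl
    | succ k ih => rw [hpowS, ih, pow_succ']; rfl
  simp only [hpow] at h19 ⊢
  exact fun m n _ => hFbrk.bracket_pow_pow_of_bracket_pow_self halt h19 m n

end BilinearMul

/-- Identity (19) implies identity (20): if `[X^{∘n}, X] = (1 − n) • (X^{∘n} ∘ [e,X])`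
for all `n ≥ 1`, then `[X^{∘n}, X^{∘m}] = (m − n) • (X^{∘(m+n−1)} ∘ [e,X])`
for all `m + n ≥ 1`. -/
theorem bracket_powers_of_identity19 {R A : Type*} [CommRing R] [AddCommGroup A] [Module R A]
    (mul brk : A →ₗ[R] A →ₗ[R] A)
    (hcomm : ∀ x y : A, mul x y = mul y x)
    (hassoc : ∀ x y z : A, mul (mul x y) z = mul x (mul y z))
    (halt : ∀ x : A, brk x x = 0)
    (hjac : ∀ x y z : A, brk x (brk y z) + brk y (brk z x) + brk z (brk x y) = 0)
    (hF : ∀ x y z w : A,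
      Pdev mul brk (mul x y) z w = mul x (Pdev mul brk y z w) + mul y (Pdev mul brk x z w))
    (e : A) (he : ∀ x : A, mul e x = x)
    (X : A) (pow : ℕ → A) (hpow0 : pow 0 = e)
    (hpowS : ∀ k : ℕ, pow (k + 1) = mul X (pow k))
    (h19 : ∀ n : ℕ, 1 ≤ n →
      brk (pow n) X = (1 - (n : ℤ)) • mul (pow n) (brk e X)) :
    ∀ m n : ℕ, 1 ≤ m + n →
      brk (pow n) (pow m) = ((m : ℤ) - (n : ℤ)) • mul (pow (m + n - 1)) (brk e X) :=
  bracket_powers_of_identity19_general mul brk hcomm hassoc halt hF e he X pow hpow0 hpowS h19
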